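/- arXiv:1911.06920 — 2 statements merged into one kernel-verified Lean document; each statement's English description precedes it below -/
import Mathlib

section
/- (Almost-sure liminf convergence.) Consider a TRish process for f with constant parameters γ_{1,k} = γ1 ≥ γ2 = γ_{2,k} > 0 and stepsizes α_k = a/(b + k) for some a, b > 0 such that α_k ≤ γ2/(4γ1²(L_g + M_H)) for all k. Suppose there exist M_g, M_H > 0 such that for all k, E[‖∇f(x_k) − g_k‖² | ℱ_k] ≤ M_g·α_k and ‖H_k‖ ≤ M_H almost surely. Then liminf_{k→∞} ‖∇f(x_k)‖ = 0 almost surely. -/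
/-! The radius always satisfies `γ2 α ‖g‖ ≤ Δ ≤ γ1 α ‖g‖`, so Cauchy decrease may be tested at
`t = γ2 α`, and every step has norm at most `γ1 α ‖g‖`. Combined with a first-order Taylor bound
(`taylor_bound`) and the upper bound on the stepsizes, which absorbs all terms quadratic in `α`,
this gives a pathwise inequality (`descent_step`)

`f (x_{k+1}) ≤ f (x_k) - (γ2 / 4) α_k ‖∇f (x_k)‖² + C α_k ‖∇f (x_k) - g_k‖²`.

Taking expectations, the last term contributes at most `C M_g α_k²`, which is summable. As `f` is
bounded below, telescoping bounds `∑ E[α_k ‖∇f (x_k)‖²]`, hence `∑ α_k ‖∇f (x_k)‖²` converges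
almost surely (`ae_summable_of_integral_le`). Since `∑ α_k = ∞`, the gradient norms cannot stay
away from zero (`liminf_eq_zero_of_summable`). -/


open MeasureTheory RealInnerProductSpace Filter

noncomputable section

/-- A step `s` achieves Cauchy decrease for `(g, H, Δ)`. -/
def CauchyDecrease {n : ℕ} (g : EuclideanSpace ℝ (Fin n))
    (H : EuclideanSpace ℝ (Fin n) →L[ℝ] EuclideanSpace ℝ (Fin n))
    (Δ : ℝ) (s : EuclideanSpace ℝ (Fin n)) : Prop :=
  ‖s‖ ≤ Δ ∧ ∀ t : ℝ, 0 ≤ t → t * ‖g‖ ≤ Δ →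
    ⟪g, s⟫ + (1/2) * ⟪s, H s⟫ ≤ -(t * ‖g‖^2) + (1/2) * t^2 * ⟪g, H g⟫

/-- The TRish trust-region radius `Δ(α, γ1, γ2, g)`. -/
def radius {n : ℕ} (α γ1 γ2 : ℝ) (g : EuclideanSpace ℝ (Fin n)) : ℝ :=
  if ‖g‖ < 1/γ1 then γ1 * α * ‖g‖
  else if ‖g‖ ≤ 1/γ2 then α
  else γ2 * α * ‖g‖

/-- The constant `L` in place of the sharp `L / 2` comes from applying the mean value inequality
on a ball. -/
lemma taylor_bound {n : ℕ} {f : EuclideanSpace ℝ (Fin n) → ℝ} {L : ℝ} (hL : 0 < L)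
    (hf : Differentiable ℝ f)
    (hlip : ∀ y z, ‖gradient f y - gradient f z‖ ≤ L * ‖y - z‖)
    (x s : EuclideanSpace ℝ (Fin n)) :
    f (x + s) ≤ f x + ⟪gradient f x, s⟫ + L * ‖s‖ ^ 2 := by
  have key := (convex_closedBall x ‖s‖).norm_image_sub_le_of_norm_hasFDerivWithin_le'
    (f := f) (f' := fderiv ℝ f) (φ := fderiv ℝ f x) (C := L * ‖s‖) (x := x) (y := x + s)
    (fun z _ => (hf z).hasFDerivAt.hasFDerivWithinAt)
    (fun z hz => by
      have h1 := hlip z x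
      have h2 : ‖fderiv ℝ f z - fderiv ℝ f x‖ = ‖gradient f z - gradient f x‖ := by
        unfold gradient
        rw [← map_sub, LinearIsometryEquiv.norm_map]
      have h3 : ‖z - x‖ ≤ ‖s‖ := by simpa [dist_eq_norm] using hz
      rw [h2]
      exact h1.trans (by gcongr))
    (by simp) (by simp)
  have h4 : fderiv ℝ f x s = ⟪gradient f x, s⟫ := by
    simp [gradient]
  rw [add_sub_cancel_left, h4, Real.norm_eq_abs] at key
  have := le_of_abs_le key
  nlinarith

lemma radius_bounds {n : ℕ} {α γ1 γ2 : ℝ} (hα : 0 < α) (hγ2 : 0 < γ2) (hγ12 : γ2 ≤ γ1)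
    (g : EuclideanSpace ℝ (Fin n)) :
    γ2 * α * ‖g‖ ≤ radius α γ1 γ2 g ∧ radius α γ1 γ2 g ≤ γ1 * α * ‖g‖ := by
  have hγ1 : 0 < γ1 := hγ2.trans_le hγ12
  have hg := norm_nonneg g
  have h12 : γ2 * α * ‖g‖ ≤ γ1 * α * ‖g‖ := by gcongr
  unfold radius
  split_ifs with h1 h2
  · exact ⟨h12, le_rfl⟩
  · rw [not_lt, div_le_iff₀ hγ1] at h1
    rw [le_div_iff₀ hγ2] at h2
    constructor <;> nlinarith
  · exact ⟨le_rfl, h12⟩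

/-- The pathwise decrease of `f` along one step, with error governed by the gradient noise. -/
lemma descent_step {n : ℕ} {f : EuclideanSpace ℝ (Fin n) → ℝ} {L M α γ1 γ2 : ℝ}
    (hL : 0 < L) (hf : Differentiable ℝ f)
    (hlip : ∀ y z, ‖gradient f y - gradient f z‖ ≤ L * ‖y - z‖)
    (hM : 0 < M) (hα : 0 < α) (hγ2 : 0 < γ2) (hγ12 : γ2 ≤ γ1)
    (hαub : α ≤ γ2 / (4 * γ1 ^ 2 * (L + M)))
    (x g s : EuclideanSpace ℝ (Fin n))
    (H : EuclideanSpace ℝ (Fin n) →L[ℝ] EuclideanSpace ℝ (Fin n)) (hH : ‖H‖ ≤ M)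
    (hc : CauchyDecrease g H (radius α γ1 γ2 g) s) :
    f (x + s) ≤ f x - γ2 / 4 * (α * ‖gradient f x‖ ^ 2)
      + (γ1 ^ 2 / γ2 + γ2 / 2) * (α * ‖gradient f x - g‖ ^ 2) := by
  have hγ1 : 0 < γ1 := hγ2.trans_le hγ12
  obtain ⟨hlo, hhi⟩ := radius_bounds hα hγ2 hγ12 g
  obtain ⟨hs, hdec⟩ := hc
  have hs' : ‖s‖ ≤ γ1 * α * ‖g‖ := hs.trans hhi
  have hs2 : ‖s‖ ^ 2 ≤ γ1 ^ 2 * α ^ 2 * ‖g‖ ^ 2 := by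
    calc ‖s‖ ^ 2 ≤ (γ1 * α * ‖g‖) ^ 2 := by gcongr
      _ = _ := by ring
  have hquad : ∀ v : EuclideanSpace ℝ (Fin n), |⟪v, H v⟫| ≤ M * ‖v‖ ^ 2 := fun v => by
    calc |⟪v, H v⟫| ≤ ‖v‖ * ‖H v‖ := abs_real_inner_le_norm _ _
      _ ≤ ‖v‖ * (M * ‖v‖) := by gcongr; exact H.le_of_opNorm_le hH v
      _ = _ := by ring
  have hd := hdec (γ2 * α) (by positivity) hlo
  have h1 := taylor_bound hL hf hlip x s
  have hsplit : ⟪gradient f x, s⟫ = ⟪g, s⟫ + ⟪gradient f x - g, s⟫ := by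
    rw [inner_sub_left]; ring
  have hgH := le_of_abs_le (hquad g)
  have hsH := neg_le_of_abs_le (hquad s)
  have he : ⟪gradient f x - g, s⟫ ≤ ‖gradient f x - g‖ * (γ1 * α * ‖g‖) :=
    (real_inner_le_norm _ _).trans (by gcongr)
  have htri : ‖gradient f x‖ ^ 2 ≤ 2 * ‖g‖ ^ 2 + 2 * ‖gradient f x - g‖ ^ 2 := by
    have h : ‖gradient f x‖ ≤ ‖g‖ + ‖gradient f x - g‖ := by
      simpa using norm_add_le g (gradient f x - g)
    nlinarith [sq_nonneg (‖g‖ - ‖gradient f x - g‖), norm_nonneg (gradient f x), norm_nonneg g,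
      norm_nonneg (gradient f x - g)]
  have hα4 : γ1 ^ 2 * α * (L + M) ≤ γ2 / 4 := by
    rw [le_div_iff₀ (by positivity)] at hαub
    linarith
  set E := ‖gradient f x - g‖
  set G := ‖g‖
  set N := ‖gradient f x‖
  -- all terms of order `α ^ 2` are absorbed using the stepsize bound
  have hq : (1 / 2) * (γ2 * α) ^ 2 * (M * G ^ 2) + (L + M / 2) * (γ1 ^ 2 * α ^ 2 * G ^ 2)
      ≤ γ2 / 4 * (α * G ^ 2) := by
    have hsq : γ2 ^ 2 ≤ γ1 ^ 2 := by gcongr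
    calc (1 / 2) * (γ2 * α) ^ 2 * (M * G ^ 2) + (L + M / 2) * (γ1 ^ 2 * α ^ 2 * G ^ 2)
        = (1 / 2) * γ2 ^ 2 * (α ^ 2 * M * G ^ 2)
          + (L + M / 2) * (γ1 ^ 2 * α ^ 2 * G ^ 2) := by ring
      _ ≤ (1 / 2) * γ1 ^ 2 * (α ^ 2 * M * G ^ 2)
          + (L + M / 2) * (γ1 ^ 2 * α ^ 2 * G ^ 2) := by gcongr
      _ = γ1 ^ 2 * α * (L + M) * (α * G ^ 2) := by ring
      _ ≤ _ := by gcongr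
  -- Young, weighted so that the `‖g‖ ^ 2` part costs only another quarter of the decrease
  have hyoung : E * (γ1 * α * G) ≤ γ2 / 4 * (α * G ^ 2) + γ1 ^ 2 / γ2 * (α * E ^ 2) := by
    have h : γ2 / 4 * (α * G ^ 2) + γ1 ^ 2 / γ2 * (α * E ^ 2) - E * (γ1 * α * G)
        = α / γ2 * (γ2 / 2 * G - γ1 * E) ^ 2 := by field_simp; ring
    have : 0 ≤ α / γ2 * (γ2 / 2 * G - γ1 * E) ^ 2 := by positivity
    linarith
  have hgH' : 1 / 2 * (γ2 * α) ^ 2 * ⟪g, H g⟫ ≤ (1 / 2) * (γ2 * α) ^ 2 * (M * G ^ 2) := by gcongr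
  have hs2' : (L + M / 2) * ‖s‖ ^ 2 ≤ (L + M / 2) * (γ1 ^ 2 * α ^ 2 * G ^ 2) := by gcongr
  have htri' : γ2 * α / 4 * N ^ 2 ≤ γ2 * α / 4 * (2 * G ^ 2 + 2 * E ^ 2) := by gcongr
  linarith

/-- Nonnegative functions whose integrals have bounded partial sums are almost surely summable. -/
lemma ae_summable_of_integral_le {Ω : Type*} {m0 : MeasurableSpace Ω} {P : Measure Ω}
    {u : ℕ → Ω → ℝ} (hu : ∀ k, Integrable (u k) P) (hpos : ∀ k ω, 0 ≤ u k ω) {C : ℝ}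
    (hC : ∀ N, ∑ k ∈ Finset.range N, ∫ ω, u k ω ∂P ≤ C) :
    ∀ᵐ ω ∂P, Summable fun k => u k ω := by
  have hmeas : ∀ k, AEMeasurable (fun ω => ENNReal.ofReal (u k ω)) P :=
    fun k => (hu k).aemeasurable.ennreal_ofReal
  have hfin : ∫⁻ ω, ∑' k, ENNReal.ofReal (u k ω) ∂P ≠ ⊤ := by
    rw [lintegral_tsum hmeas]
    have h : ∀ k, ∫⁻ ω, ENNReal.ofReal (u k ω) ∂P = ENNReal.ofReal (∫ ω, u k ω ∂P) := fun k =>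
      (ofReal_integral_eq_lintegral_ofReal (hu k) (Eventually.of_forall (hpos k))).symm
    simp_rw [h]
    exact (summable_of_sum_range_le (fun k => integral_nonneg (hpos k)) hC).tsum_ofReal_ne_top
  filter_upwards [ae_lt_top' (AEMeasurable.tsum hmeas) hfin] with ω hω
  have h := ENNReal.summable_toReal hω.ne
  simpa [ENNReal.toReal_ofReal (hpos _ _)] using h

lemma liminf_eq_zero_of_summable {α v : ℕ → ℝ} (hα : ∀ k, 0 < α k) (hns : ¬ Summable α)
    (hv : ∀ k, 0 ≤ v k) (hs : Summable fun k => α k * v k ^ 2) :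
    liminf v atTop = 0 := by
  have hfreq : ∀ ε > 0, ∃ᶠ k in atTop, v k ≤ ε := by
    intro ε hε hcon
    apply hns
    have hs' : Summable fun k => α k * v k ^ 2 / ε ^ 2 := hs.div_const _
    refine summable_of_isBigO_nat hs' (Asymptotics.IsBigO.of_bound 1 ?_)
    filter_upwards [hcon] with k hk
    have hk' := (not_le.mp hk).le
    rw [Real.norm_of_nonneg (hα k).le,
      Real.norm_of_nonneg (by have := (hα k).le; positivity), one_mul, le_div_iff₀ (by positivity)]
    have := (hα k).le
    gcongr
  have hbdd : IsBoundedUnder (· ≥ ·) atTop v := ⟨0, by simpa using ⟨0, fun k _ => hv k⟩⟩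
  apply le_antisymm
  · refine le_of_forall_pos_le_add fun ε hε => ?_
    rw [zero_add]
    exact liminf_le_of_frequently_le (hfreq ε hε) hbdd
  · refine le_liminf_of_le ?_ (Eventually.of_forall hv)
    exact IsCoboundedUnder.of_frequently_le (hfreq 1 one_pos)

/-- Almost-sure liminf convergence. -/
theorem trish_liminf_convergence
    {n : ℕ} (hn : 1 ≤ n)
    (f : EuclideanSpace ℝ (Fin n) → ℝ)
    (L_g : ℝ) (hLg : 0 < L_g)
    (hf : ContDiff ℝ 2 f)
    (hlip : ∀ y z, ‖gradient f y - gradient f z‖ ≤ L_g * ‖y - z‖)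
    (f_inf : ℝ) (hbdd : ∀ y, f_inf ≤ f y) (hfinf : f_inf = ⨅ y, f y)
    {Ω : Type*} {m0 : MeasurableSpace Ω} (P : Measure Ω) [IsProbabilityMeasure P]
    (ℱ : Filtration ℕ m0)
    (x g s : ℕ → Ω → EuclideanSpace ℝ (Fin n))
    (H : ℕ → Ω → (EuclideanSpace ℝ (Fin n) →L[ℝ] EuclideanSpace ℝ (Fin n)))
    (γ1 γ2 : ℝ) (hγ2 : 0 < γ2) (hγ12 : γ2 ≤ γ1)
    (a b : ℝ) (ha : 0 < a) (hb : 0 < b)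
    (α : ℕ → ℝ) (hαdef : ∀ k : ℕ, α k = a / (b + k))
    (x1 : EuclideanSpace ℝ (Fin n)) (hx1 : ∀ ω, x 1 ω = x1)
    (hx_meas : ∀ k, 1 ≤ k → StronglyMeasurable[ℱ k] (x k))
    (hg_meas : ∀ k, 1 ≤ k → StronglyMeasurable[ℱ (k+1)] (g k))
    (hs_meas : ∀ k, 1 ≤ k → StronglyMeasurable[ℱ (k+1)] (s k))
    (hH_meas : ∀ k, 1 ≤ k → StronglyMeasurable[ℱ (k+1)] (H k))
    (hHsymm : ∀ k ω u v, ⟪H k ω u, v⟫ = ⟪u, H k ω v⟫)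
    (hstep : ∀ k, 1 ≤ k → ∀ ω, x (k+1) ω = x k ω + s k ω)
    (hunbiased : ∀ k, 1 ≤ k → P[g k|ℱ k] =ᵐ[P] fun ω => gradient f (x k ω))
    (hcauchy : ∀ k, 1 ≤ k → ∀ᵐ ω ∂P,
      CauchyDecrease (g k ω) (H k ω) (radius (α k) γ1 γ2 (g k ω)) (s k ω))
    (hint_f : ∀ k, Integrable (fun ω => f (x k ω)) P)
    (hint_grad : ∀ k, Integrable (fun ω => ‖gradient f (x k ω)‖^2) P)
    (hint_g : ∀ k, Integrable (g k) P)
    (hint_g2 : ∀ k, Integrable (fun ω => ‖g k ω‖^2) P)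
    (M_g M_H : ℝ) (hMg : 0 < M_g) (hMH : 0 < M_H)
    (hvar : ∀ k, 1 ≤ k → ∀ᵐ ω ∂P,
      (P[(fun ω' => ‖gradient f (x k ω') - g k ω'‖^2)|ℱ k]) ω ≤ M_g * α k)
    (hHbd : ∀ k, 1 ≤ k → ∀ᵐ ω ∂P, ‖H k ω‖ ≤ M_H)
    (hαub : ∀ k, 1 ≤ k → α k ≤ γ2 / (4 * γ1^2 * (L_g + M_H))) :
    ∀ᵐ ω ∂P, Filter.liminf (fun k : ℕ => ‖gradient f (x k ω)‖) atTop = 0 := by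
  have hα0 : ∀ k, 0 < α k := fun k => by rw [hαdef]; positivity
  have hns : ¬ Summable α := by
    intro hcon
    apply Real.not_summable_natCast_inv
    have hsum : Summable fun k => (b + 1) / a * α k := hcon.mul_left _
    refine summable_of_isBigO_nat hsum (Asymptotics.IsBigO.of_bound 1 ?_)
    filter_upwards [eventually_ge_atTop 1] with k hk
    have hk' : (1 : ℝ) ≤ k := by exact_mod_cast hk
    have := hα0 k
    rw [Real.norm_of_nonneg (by positivity), Real.norm_of_nonneg (by positivity), one_mul, hαdef]
    rw [div_mul_div_comm, mul_comm a, mul_div_mul_right _ _ ha.ne', inv_eq_one_div,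
      div_le_div_iff₀ (by positivity) (by positivity)]
    nlinarith
  have hsq : Summable fun k => α (k + 1) ^ 2 := by
    have h2 : Summable fun k : ℕ => a ^ 2 * ((k : ℝ) ^ 2)⁻¹ :=
      (Real.summable_nat_pow_inv.mpr one_lt_two).mul_left _
    refine Summable.of_nonneg_of_le (fun k => sq_nonneg _) (fun k => ?_)
      ((summable_nat_add_iff 1).mpr h2)
    rw [hαdef, div_pow, div_eq_mul_inv]
    gcongr
    linarith
  have hdiff : Differentiable ℝ f := hf.differentiable (by norm_num)
  have hgc : Continuous (gradient f) := by
    have hL : LipschitzWith L_g.toNNReal (gradient f) := LipschitzWith.of_dist_le_mul fun y z => by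
      rw [dist_eq_norm, dist_eq_norm, Real.coe_toNNReal _ hLg.le]
      exact hlip y z
    exact hL.continuous
  have hint_e : ∀ k, 1 ≤ k → Integrable (fun ω => ‖gradient f (x k ω) - g k ω‖ ^ 2) P := by
    intro k hk
    have hm : AEStronglyMeasurable (fun ω => gradient f (x k ω)) P :=
      (hgc.comp_stronglyMeasurable ((hx_meas k hk).mono (ℱ.le k))).aestronglyMeasurable
    refine Integrable.mono' (((hint_grad k).const_mul 2).add ((hint_g2 k).const_mul 2))
      ((hm.sub (hint_g k).aestronglyMeasurable).norm.pow 2) (Eventually.of_forall fun ω => ?_)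
    rw [Real.norm_of_nonneg (by positivity)]
    have h := norm_sub_le (gradient f (x k ω)) (g k ω)
    simp only [Pi.add_apply]
    nlinarith [sq_nonneg (‖gradient f (x k ω)‖ - ‖g k ω‖),
      norm_nonneg (gradient f (x k ω) - g k ω), norm_nonneg (gradient f (x k ω)),
      norm_nonneg (g k ω)]
  have hvar' : ∀ k, 1 ≤ k → ∫ ω, ‖gradient f (x k ω) - g k ω‖ ^ 2 ∂P ≤ M_g * α k := by
    intro k hk
    rw [← integral_condExp (ℱ.le k)]
    calc _ ≤ ∫ _, M_g * α k ∂P :=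
          integral_mono_ae integrable_condExp (integrable_const _) (hvar k hk)
      _ = _ := by simp
  set C : ℝ := γ1 ^ 2 / γ2 + γ2 / 2 with hCdef
  have hγ1 : 0 < γ1 := hγ2.trans_le hγ12
  have hC : 0 < C := by positivity
  have hexp : ∀ k, 1 ≤ k → ∫ ω, f (x (k + 1) ω) ∂P ≤ ∫ ω, f (x k ω) ∂P
      - γ2 / 4 * ∫ ω, α k * ‖gradient f (x k ω)‖ ^ 2 ∂P + C * M_g * α k ^ 2 := by
    intro k hk
    have hi1 : Integrable (fun ω => γ2 / 4 * (α k * ‖gradient f (x k ω)‖ ^ 2)) P :=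
      ((hint_grad k).const_mul _).const_mul _
    have hi2 : Integrable (fun ω => C * (α k * ‖gradient f (x k ω) - g k ω‖ ^ 2)) P :=
      ((hint_e k hk).const_mul _).const_mul _
    have hi3 : Integrable (fun ω => f (x k ω) - γ2 / 4 * (α k * ‖gradient f (x k ω)‖ ^ 2)) P :=
      (hint_f k).sub hi1
    have hle : ∫ ω, f (x (k + 1) ω) ∂P ≤
        ∫ ω, (f (x k ω) - γ2 / 4 * (α k * ‖gradient f (x k ω)‖ ^ 2)
          + C * (α k * ‖gradient f (x k ω) - g k ω‖ ^ 2)) ∂P := by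
      refine integral_mono_ae (hint_f _) (hi3.add hi2) ?_
      filter_upwards [hcauchy k hk, hHbd k hk] with ω hc hH
      rw [hstep k hk]
      exact descent_step hLg hdiff hlip hMH (hα0 k) hγ2 hγ12 (hαub k hk) _ _ _ _ hH hc
    rw [integral_add hi3 hi2, integral_sub (hint_f k) hi1, integral_const_mul,
      integral_const_mul (μ := P) C, integral_const_mul (μ := P) (α k)
        (fun ω => ‖gradient f (x k ω) - g k ω‖ ^ 2)] at hle
    have h : C * (α k * ∫ ω, ‖gradient f (x k ω) - g k ω‖ ^ 2 ∂P)
        ≤ C * (α k * (M_g * α k)) := by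
      have := (hα0 k).le
      gcongr
      exact hvar' k hk
    linarith
  have htel : ∀ N, γ2 / 4 * ∑ k ∈ Finset.range N,
      ∫ ω, α (k + 1) * ‖gradient f (x (k + 1) ω)‖ ^ 2 ∂P
      ≤ ∫ ω, f (x 1 ω) ∂P - ∫ ω, f (x (N + 1) ω) ∂P
        + C * M_g * ∑ k ∈ Finset.range N, α (k + 1) ^ 2 := by
    intro N
    induction N with
    | zero => simp
    | succ N ih =>
      rw [Finset.sum_range_succ, Finset.sum_range_succ]
      have := hexp (N + 1) (by omega)
      linarith
  have hae : ∀ᵐ ω ∂P, Summable fun k => α (k + 1) * ‖gradient f (x (k + 1) ω)‖ ^ 2 := by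
    refine ae_summable_of_integral_le (C := (∫ ω, f (x 1 ω) ∂P - f_inf
        + C * M_g * ∑' k, α (k + 1) ^ 2) / (γ2 / 4)) (fun k => (hint_grad _).const_mul _)
      (fun k ω => by have := (hα0 (k + 1)).le; positivity) (fun N => ?_)
    rw [le_div_iff₀ (by positivity), mul_comm]
    refine (htel N).trans ?_
    have h1 : f_inf ≤ ∫ ω, f (x (N + 1) ω) ∂P := by
      calc f_inf = ∫ _, f_inf ∂P := by simp
        _ ≤ _ := integral_mono (integrable_const _) (hint_f _) fun ω => hbdd _
    have h2 : ∑ k ∈ Finset.range N, α (k + 1) ^ 2 ≤ ∑' k, α (k + 1) ^ 2 :=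
      hsq.sum_le_tsum _ fun k _ => sq_nonneg _
    gcongr
  filter_upwards [hae] with ω hω
  have hω' : Summable fun k => α k * ‖gradient f (x k ω)‖ ^ 2 := (summable_nat_add_iff 1).mp hω
  exact liminf_eq_zero_of_summable hα0 hns (fun k => norm_nonneg _) hω'
end
end

section
/- (PL case, merging parameters: sublinear convergence.) Consider a TRish process for f with γ_{1,k} = γ1 > 0 for all k, stepsizes α_k = a/(b + k) for some a, b > 0, and γ_{2,k} = γ1(1 − (1/2)η·α_k) for some η > 0. Suppose f satisfies the Polyak–Łojasiewicz condition with constant c > 0; there exist M_g, M_H > 0 with E[‖∇f(x_k) − g_k‖² | ℱ_k] ≤ M_g and ‖H_k‖ ≤ M_H almost surely for all k; M_H ≤ η/(2γ1); for all k, α_k ≤ min{γ_{2,k}/(4γ1²(L_g + M_H)), 1/(6η + 2γ1(L_g + M_H)), 2/(γ_{2,1}·c)}; and δ1·a > 1 where δ1 := (1/2)γ_{2,1}·c. Then, with δ2 := (1/2)(3η + γ1(L_g + M_H))·γ1·M_g and φ := max{(b + 1)(f(x_1) − f_inf), δ2·a²/(δ1·a − 1)}, for every k ≥ 1: E[f(x_k)]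 − f_inf ≤ φ/(b + k). -/
/-!
The proof turns the process into the scalar recursion
`F (k+1) ≤ (1 - δ1 * α k) * F k + δ2 * (α k)^2` for `F k = E[f (x k)] - f_inf`, and solves it by
induction on `k`.

The radius always has the form `t * ‖g‖` with `γ2 * α ≤ t ≤ γ1 * α` (`exists_radius_eq`). Cauchy
decrease then forces the step to be close to the scaled steepest-descent step: with `w = s + t • g`,
`‖w‖^2 ≤ 2 * M_H * t^3 * ‖g‖^2` (`norm_sq_add_smul_le`). Hence in the descent lemma
`⟪∇f, s⟫ = -t * ⟪∇f, g⟫ + ⟪∇f, w⟫`, where Young's inequality splits the last term into `t/2 * ‖∇f‖^2`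
and a term of order `α^2 * ‖g‖^2`. It matters that `w` is paired with `∇f` and not with the noise
`∇f - g`: the latter would leave an error of order `α^(3/2)`. Replacing the random `t` by the
constant `γ1 * α` costs only `(γ1 - γ2) * α * |⟪∇f, g⟫|`, again of second order in `α`. This is
`one_step_bound`.

Taking expectations, unbiasedness gives `E⟪∇f, g⟫ = E‖∇f‖^2` and the variance bound gives
`E‖g‖^2 ≤ E‖∇f‖^2 + M_g`; the stepsize condition leaves `-(γ1 * α / 4) * E‖∇f‖^2`, and the
Polyak–Łojasiewicz inequality concludes.
-/


open MeasureTheory RealInnerProductSpace Filter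

noncomputable section

/-- The descent lemma for a function with Lipschitz gradient: compare `t ↦ f (y + t • v)` on `[0, 1]`
with the quadratic of the same value at `0` whose derivative dominates. -/
theorem descent_lemma {E : Type*} [NormedAddCommGroup E] [InnerProductSpace ℝ E] [CompleteSpace E]
    {f : E → ℝ} {L : ℝ} (hf : Differentiable ℝ f)
    (hlip : ∀ y z, ‖gradient f y - gradient f z‖ ≤ L * ‖y - z‖) (y v : E) :
    f (y + v) ≤ f y + ⟪gradient f y, v⟫ + L / 2 * ‖v‖ ^ 2 := by
  have hline : ∀ t : ℝ,
      HasDerivAt (fun t : ℝ => f (y + t • v)) ⟪gradient f (y + t • v), v⟫ t := by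
    intro t
    have h1 : HasDerivAt (fun t : ℝ => y + t • v) v t := by
      simpa using ((hasDerivAt_id t).smul_const v).const_add y
    have h2 := (hf (y + t • v)).hasFDerivAt.comp_hasDerivAt t h1
    rw [inner_gradient_left]
    exact h2
  have hquad : ∀ t : ℝ,
      HasDerivAt (fun t : ℝ => f y + t * ⟪gradient f y, v⟫ + L / 2 * ‖v‖ ^ 2 * t ^ 2)
        (⟪gradient f y, v⟫ + L * ‖v‖ ^ 2 * t) t := by
    intro t
    have h1 := (((hasDerivAt_id t).mul_const ⟪gradient f y, v⟫).const_add (f y)).add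
      ((hasDerivAt_pow 2 t).const_mul (L / 2 * ‖v‖ ^ 2))
    refine h1.congr_deriv ?_
    norm_num
    ring
  have key := image_le_of_deriv_right_le_deriv_boundary (a := 0) (b := 1)
    (fun t _ => (hline t).continuousAt.continuousWithinAt)
    (fun t _ => (hline t).hasDerivWithinAt)
    (by simp) (fun t _ => (hquad t).continuousAt.continuousWithinAt)
    (fun t _ => (hquad t).hasDerivWithinAt) (fun t ht => by
      have h1 : ⟪gradient f (y + t • v) - gradient f y, v⟫ ≤ L * ‖t • v‖ * ‖v‖ :=
        (real_inner_le_norm _ _).trans (by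
          gcongr
          simpa using hlip (y + t • v) y)
      rw [inner_sub_left, norm_smul, Real.norm_of_nonneg ht.1] at h1
      linarith)
  have h := key (Set.right_mem_Icc.2 zero_le_one)
  simp only [one_smul, one_mul, one_pow, mul_one] at h
  exact h

/-- A step in the ball of radius `t * ‖g‖` whose model value is at most that of `-t • g` is within
`O(t^(3/2)) * ‖g‖` of `-t • g`. -/
theorem norm_sq_add_smul_le {E : Type*} [NormedAddCommGroup E] [InnerProductSpace ℝ E]
    {g s : E} {H : E →L[ℝ] E} {t M : ℝ} (ht : 0 ≤ t) (hs : ‖s‖ ≤ t * ‖g‖) (hH : ‖H‖ ≤ M)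
    (hmodel : ⟪g, s⟫ + (1/2) * ⟪s, H s⟫ ≤ -(t * ‖g‖^2) + (1/2) * t^2 * ⟪g, H g⟫) :
    ‖s + t • g‖ ^ 2 ≤ 2 * M * t ^ 3 * ‖g‖ ^ 2 := by
  have hM : 0 ≤ M := (norm_nonneg H).trans hH
  have hquad : ∀ u : E, |⟪u, H u⟫| ≤ M * ‖u‖ ^ 2 := fun u =>
    calc |⟪u, H u⟫| ≤ ‖u‖ * ‖H u‖ := abs_real_inner_le_norm _ _
      _ ≤ ‖u‖ * (M * ‖u‖) := by gcongr; exact H.le_of_opNorm_le hH u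
      _ = M * ‖u‖ ^ 2 := by ring
  have hs2 : ‖s‖ ^ 2 ≤ t ^ 2 * ‖g‖ ^ 2 := by
    rw [← mul_pow]; gcongr
  have hsH : -(M * (t ^ 2 * ‖g‖ ^ 2)) ≤ ⟪s, H s⟫ :=
    (neg_le_neg (mul_le_mul_of_nonneg_left hs2 hM)).trans (abs_le.1 (hquad s)).1
  have hgH : t ^ 2 * ⟪g, H g⟫ ≤ t ^ 2 * (M * ‖g‖ ^ 2) := by
    gcongr; exact (abs_le.1 (hquad g)).2
  have hgs : ⟪g, s⟫ ≤ -(t * ‖g‖ ^ 2) + M * t ^ 2 * ‖g‖ ^ 2 := by linarith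
  rw [norm_add_sq_real, norm_smul, Real.norm_of_nonneg ht, mul_pow, real_inner_smul_right,
    real_inner_comm]
  have := mul_le_mul_of_nonneg_left hgs ht
  linarith

/-- The trust-region radius is `‖g‖` times a factor between `γ2 * α` and `γ1 * α`. -/
theorem exists_radius_eq {n : ℕ} {α γ1 γ2 : ℝ} (hα : 0 ≤ α) (hγ2 : 0 < γ2) (hle : γ2 ≤ γ1)
    (g : EuclideanSpace ℝ (Fin n)) :
    ∃ t, γ2 * α ≤ t ∧ t ≤ γ1 * α ∧ radius α γ1 γ2 g = t * ‖g‖ := by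
  have hγ1 : 0 < γ1 := hγ2.trans_le hle
  have hmul : γ2 * α ≤ γ1 * α := by gcongr
  unfold radius
  split_ifs with h1 h2
  · exact ⟨γ1 * α, hmul, le_rfl, rfl⟩
  · rw [not_lt] at h1
    have hg : 0 < ‖g‖ := (by positivity : 0 < 1 / γ1).trans_le h1
    refine ⟨α / ‖g‖, ?_, ?_, by field_simp⟩
    · rw [le_div_iff₀ hg]
      rw [le_div_iff₀ hγ2] at h2
      nlinarith
    · rw [div_le_iff₀ hg]
      rw [div_le_iff₀ hγ1] at h1
      nlinarith
  · exact ⟨γ2 * α, le_rfl, hmul, rfl⟩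

/-- The pathwise change of `f` over one step. The only first-order terms in `α` are
`-γ1 * α * ⟪∇f, g⟫` and `γ1 * α / 2 * ‖∇f‖^2`. -/
theorem one_step_bound {n : ℕ} {f : EuclideanSpace ℝ (Fin n) → ℝ} {L : ℝ} (hL : 0 ≤ L)
    (hf : Differentiable ℝ f)
    (hlip : ∀ y z, ‖gradient f y - gradient f z‖ ≤ L * ‖y - z‖)
    {α γ1 γ2 η M : ℝ} (hα : 0 < α) (hγ1 : 0 < γ1) (hη : 0 < η) (hγ2 : 0 < γ2)
    (hγ2eq : γ2 = γ1 * (1 - (1/2) * η * α)) (hM : M ≤ η / (2 * γ1))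
    {y g s : EuclideanSpace ℝ (Fin n)}
    {H : EuclideanSpace ℝ (Fin n) →L[ℝ] EuclideanSpace ℝ (Fin n)} (hH : ‖H‖ ≤ M)
    (hs : CauchyDecrease g H (radius α γ1 γ2 g) s) :
    f (y + s) ≤ f y + (-(γ1 * α) * ⟪gradient f y, g⟫
      + (γ1 * α / 2 + γ1 * η / 4 * α ^ 2) * ‖gradient f y‖ ^ 2
      + (3 / 4 * γ1 * η + L / 2 * γ1 ^ 2) * α ^ 2 * ‖g‖ ^ 2) := by
  have hM0 : 0 ≤ M := (norm_nonneg H).trans hH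
  have hle : γ2 ≤ γ1 := by
    have : 0 < γ1 * (η * α) := by positivity
    rw [hγ2eq]; linarith
  obtain ⟨t, ht2, ht1, hr⟩ := exists_radius_eq hα.le hγ2 hle g
  have ht : 0 < t := (mul_pos hγ2 hα).trans_le ht2
  rw [hr] at hs
  have hw := norm_sq_add_smul_le ht.le hs.1 hH (hs.2 t ht.le le_rfl)
  have hdesc := descent_lemma hf hlip y s
  set G := gradient f y with hG
  have hsplit : ⟪G, s⟫ = -t * ⟪G, g⟫ + ⟪G, s + t • g⟫ := by
    rw [inner_add_right, real_inner_smul_right]; ring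
  have htsq : t ^ 2 ≤ γ1 ^ 2 * α ^ 2 := by rw [← mul_pow]; gcongr
  have hMγ : M * (2 * γ1) ≤ η := by rwa [le_div_iff₀ (by positivity)] at hM
  -- Young's inequality with weight `t`, so that the factor `t^3` in `hw` becomes `t^2`.
  have hyoung : ⟪G, s + t • g⟫ ≤ t / 2 * ‖G‖ ^ 2 + M * t ^ 2 * ‖g‖ ^ 2 := by
    have h1 := real_inner_le_norm G (s + t • g)
    have h2 : t * (‖G‖ * ‖s + t • g‖) ≤ t * (t / 2 * ‖G‖ ^ 2 + M * t ^ 2 * ‖g‖ ^ 2) := by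
      nlinarith [sq_nonneg (t * ‖G‖ - ‖s + t • g‖)]
    exact h1.trans (le_of_mul_le_mul_left h2 ht)
  have hMt : M * t ^ 2 * ‖g‖ ^ 2 ≤ γ1 * η / 2 * α ^ 2 * ‖g‖ ^ 2 := by
    refine mul_le_mul_of_nonneg_right ?_ (sq_nonneg _)
    calc M * t ^ 2 ≤ M * (γ1 ^ 2 * α ^ 2) := by gcongr
      _ = M * (2 * γ1) * (γ1 / 2 * α ^ 2) := by ring
      _ ≤ η * (γ1 / 2 * α ^ 2) := by gcongr
      _ = γ1 * η / 2 * α ^ 2 := by ring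
  have hLs : L / 2 * ‖s‖ ^ 2 ≤ L / 2 * γ1 ^ 2 * α ^ 2 * ‖g‖ ^ 2 := by
    calc L / 2 * ‖s‖ ^ 2 ≤ L / 2 * (t * ‖g‖) ^ 2 := by gcongr; exact hs.1
      _ = L / 2 * (t ^ 2 * ‖g‖ ^ 2) := by ring
      _ ≤ L / 2 * (γ1 ^ 2 * α ^ 2 * ‖g‖ ^ 2) := by gcongr
      _ = _ := by ring
  have htG : t / 2 * ‖G‖ ^ 2 ≤ γ1 * α / 2 * ‖G‖ ^ 2 := by gcongr
  have hcross : (γ1 * α - t) * ⟪G, g⟫ ≤ γ1 * η / 4 * α ^ 2 * (‖G‖ ^ 2 + ‖g‖ ^ 2) := by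
    have h1 : ⟪G, g⟫ ≤ (‖G‖ ^ 2 + ‖g‖ ^ 2) / 2 :=
      (real_inner_le_norm G g).trans (by nlinarith [sq_nonneg (‖G‖ - ‖g‖)])
    have h2 : γ1 * α - t ≤ γ1 * η / 2 * α ^ 2 := by
      rw [hγ2eq] at ht2; linarith
    calc (γ1 * α - t) * ⟪G, g⟫ ≤ (γ1 * α - t) * ((‖G‖ ^ 2 + ‖g‖ ^ 2) / 2) :=
          mul_le_mul_of_nonneg_left h1 (by linarith)
      _ ≤ γ1 * η / 2 * α ^ 2 * ((‖G‖ ^ 2 + ‖g‖ ^ 2) / 2) := by gcongr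
      _ = _ := by ring
  linarith

/-- The first two moments of an unbiased estimator `Y` of an `m`-measurable `X` with conditional
variance at most `M`. -/
theorem moments_of_condExp_eq {Ω E : Type*} [NormedAddCommGroup E] [InnerProductSpace ℝ E]
    [CompleteSpace E] {m m0 : MeasurableSpace Ω} (hm : m ≤ m0) {P : Measure Ω}
    [IsProbabilityMeasure P] {X Y : Ω → E} {M : ℝ} (hX : StronglyMeasurable[m] X)
    (hX2 : Integrable (fun ω => ‖X ω‖ ^ 2) P) (hY : Integrable Y P)
    (hY2 : Integrable (fun ω => ‖Y ω‖ ^ 2) P) (hcond : P[Y|m] =ᵐ[P] X)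
    (hvar : ∀ᵐ ω ∂P, (P[(fun ω' => ‖X ω' - Y ω'‖ ^ 2)|m]) ω ≤ M) :
    Integrable (fun ω => ⟪X ω, Y ω⟫) P ∧
      ∫ ω, ⟪X ω, Y ω⟫ ∂P = ∫ ω, ‖X ω‖ ^ 2 ∂P ∧
      ∫ ω, ‖Y ω‖ ^ 2 ∂P ≤ (∫ ω, ‖X ω‖ ^ 2 ∂P) + M := by
  have hXae : AEStronglyMeasurable X P := (hX.mono hm).aestronglyMeasurable
  have hXY : Integrable (fun ω => ⟪X ω, Y ω⟫) P := by
    refine ((hX2.add hY2).div_const 2).mono' (hXae.inner hY.aestronglyMeasurable)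
      (ae_of_all _ fun ω => ?_)
    refine (abs_real_inner_le_norm _ _).trans ?_
    simp only [Pi.add_apply]
    nlinarith [sq_nonneg (‖X ω‖ - ‖Y ω‖)]
  have hinner : ∫ ω, ⟪X ω, Y ω⟫ ∂P = ∫ ω, ‖X ω‖ ^ 2 ∂P := by
    have hpull := condExp_bilin_of_stronglyMeasurable_left (innerSL ℝ (E := E)) hX
      (show Integrable (fun ω => ⟪X ω, Y ω⟫) P from hXY) hY
    rw [← integral_condExp hm]
    refine integral_congr_ae ?_
    filter_upwards [hpull, hcond] with ω h1 h2
    rw [h2] at h1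
    exact h1.trans (real_inner_self_eq_norm_sq _)
  have hexp : ∀ ω, ‖X ω - Y ω‖ ^ 2 = ‖X ω‖ ^ 2 - 2 * ⟪X ω, Y ω⟫ + ‖Y ω‖ ^ 2 := fun ω =>
    norm_sub_sq_real _ _
  have hvar' : ∫ ω, ‖X ω - Y ω‖ ^ 2 ∂P ≤ M := by
    rw [← integral_condExp hm]
    simpa using integral_mono_ae integrable_condExp (integrable_const M) hvar
  simp_rw [hexp] at hvar'
  rw [integral_add (by exact hX2.sub (hXY.const_mul 2)) hY2,
    integral_sub hX2 (hXY.const_mul 2),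
    integral_const_mul, hinner] at hvar'
  exact ⟨hXY, hinner, by linarith⟩

/-- A recursion `F (k+1) ≤ (1 - δ1 α) F k + δ2 α^2` with `α = a / (b + k)` preserves the bound
`F k ≤ φ / (b + k)`; here `B = b + k`, and `F`, `F'` are consecutive values. -/
theorem sublinear_step {B a δ1 δ2 φ F F' : ℝ} (hB : 0 < B) (hδa : 1 < δ1 * a)
    (hδα : δ1 * (a / B) ≤ 1) (hφ : δ2 * a ^ 2 / (δ1 * a - 1) ≤ φ) (hφ0 : 0 ≤ φ) (hF : F ≤ φ / B)
    (hrec : F' ≤ (1 - δ1 * (a / B)) * F + δ2 * (a / B) ^ 2) : F' ≤ φ / (B + 1) := by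
  have h1 : (1 - δ1 * (a / B)) * F ≤ (1 - δ1 * (a / B)) * (φ / B) :=
    mul_le_mul_of_nonneg_left hF (by linarith)
  rw [div_le_iff₀ (by linarith)] at hφ
  have h2 : (1 - δ1 * (a / B)) * (φ / B) + δ2 * (a / B) ^ 2
      = (φ * (B - 1) - (φ * (δ1 * a - 1) - δ2 * a ^ 2)) / B ^ 2 := by
    field_simp
    ring
  have h3 : (φ * (B - 1) - (φ * (δ1 * a - 1) - δ2 * a ^ 2)) / B ^ 2 ≤ φ / (B + 1) := by
    rw [div_le_div_iff₀ (by positivity) (by positivity)]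
    nlinarith
  linarith

/-- PL case, merging parameters: sublinear convergence. -/
theorem trish_pl_merging_parameters
    {n : ℕ} (hn : 1 ≤ n)
    (f : EuclideanSpace ℝ (Fin n) → ℝ)
    (L_g : ℝ) (hLg : 0 < L_g)
    (hf : ContDiff ℝ 2 f)
    (hlip : ∀ y z, ‖gradient f y - gradient f z‖ ≤ L_g * ‖y - z‖)
    (f_inf : ℝ) (hbdd : ∀ y, f_inf ≤ f y) (hfinf : f_inf = ⨅ y, f y)
    {Ω : Type*} {m0 : MeasurableSpace Ω} (P : Measure Ω) [IsProbabilityMeasure P]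
    (ℱ : Filtration ℕ m0)
    (x g s : ℕ → Ω → EuclideanSpace ℝ (Fin n))
    (H : ℕ → Ω → (EuclideanSpace ℝ (Fin n) →L[ℝ] EuclideanSpace ℝ (Fin n)))
    (γ1 : ℝ) (hγ1 : 0 < γ1)
    (a b η : ℝ) (ha : 0 < a) (hb : 0 < b) (hη : 0 < η)
    (α : ℕ → ℝ) (hαdef : ∀ k : ℕ, α k = a / (b + k))
    (γ2 : ℕ → ℝ) (hγ2def : ∀ k : ℕ, γ2 k = γ1 * (1 - (1/2) * η * α k))
    (hγ2pos : ∀ k, 1 ≤ k → 0 < γ2 k)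
    (x1 : EuclideanSpace ℝ (Fin n)) (hx1 : ∀ ω, x 1 ω = x1)
    (hx_meas : ∀ k, 1 ≤ k → StronglyMeasurable[ℱ k] (x k))
    (hg_meas : ∀ k, 1 ≤ k → StronglyMeasurable[ℱ (k+1)] (g k))
    (hs_meas : ∀ k, 1 ≤ k → StronglyMeasurable[ℱ (k+1)] (s k))
    (hH_meas : ∀ k, 1 ≤ k → StronglyMeasurable[ℱ (k+1)] (H k))
    (hHsymm : ∀ k ω u v, ⟪H k ω u, v⟫ = ⟪u, H k ω v⟫)
    (hstep : ∀ k, 1 ≤ k → ∀ ω, x (k+1) ω = x k ω + s k ω)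
    (hunbiased : ∀ k, 1 ≤ k → P[g k|ℱ k] =ᵐ[P] fun ω => gradient f (x k ω))
    (hcauchy : ∀ k, 1 ≤ k → ∀ᵐ ω ∂P,
      CauchyDecrease (g k ω) (H k ω) (radius (α k) γ1 (γ2 k) (g k ω)) (s k ω))
    (hint_f : ∀ k, Integrable (fun ω => f (x k ω)) P)
    (hint_grad : ∀ k, Integrable (fun ω => ‖gradient f (x k ω)‖^2) P)
    (hint_g : ∀ k, Integrable (g k) P)
    (hint_g2 : ∀ k, Integrable (fun ω => ‖g k ω‖^2) P)
    (c : ℝ) (hc : 0 < c)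
    (hPL : ∀ y, 2 * c * (f y - f_inf) ≤ ‖gradient f y‖^2)
    (M_g M_H : ℝ) (hMg : 0 < M_g) (hMH : 0 < M_H)
    (hvar : ∀ k, 1 ≤ k → ∀ᵐ ω ∂P,
      (P[(fun ω' => ‖gradient f (x k ω') - g k ω'‖^2)|ℱ k]) ω ≤ M_g)
    (hHbd : ∀ k, 1 ≤ k → ∀ᵐ ω ∂P, ‖H k ω‖ ≤ M_H)
    (hMHη : M_H ≤ η / (2 * γ1))
    (hα1 : ∀ k, 1 ≤ k → α k ≤ γ2 k / (4 * γ1^2 * (L_g + M_H)))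
    (hα2 : ∀ k, 1 ≤ k → α k ≤ 1 / (6 * η + 2 * γ1 * (L_g + M_H)))
    (hα3 : ∀ k, 1 ≤ k → α k ≤ 2 / (γ2 1 * c))
    (hδ1a : 1 < ((1/2) * γ2 1 * c) * a) :
    ∀ k : ℕ, 1 ≤ k →
      (∫ ω, f (x k ω) ∂P) - f_inf ≤
        max ((b + 1) * (f x1 - f_inf))
          (((1/2) * (3 * η + γ1 * (L_g + M_H)) * γ1 * M_g) * a^2
            / (((1/2) * γ2 1 * c) * a - 1)) / (b + k) := by
  have hdiff : Differentiable ℝ f := hf.differentiable (by norm_num)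
  have hgradcont : Continuous (gradient f) :=
    (LipschitzWith.of_dist_le_mul (K := ⟨L_g, hLg.le⟩) fun y z => by
      rw [dist_eq_norm, dist_eq_norm]; exact hlip y z).continuous
  have hαpos : ∀ k : ℕ, 0 < α k := fun k => by rw [hαdef]; positivity
  set δ1 := (1/2) * γ2 1 * c with hδ1
  set δ2 := (1/2) * (3 * η + γ1 * (L_g + M_H)) * γ1 * M_g with hδ2
  set φ := max ((b + 1) * (f x1 - f_inf)) (δ2 * a^2 / (δ1 * a - 1)) with hφ
  have hφ0 : 0 ≤ φ := le_max_of_le_left (mul_nonneg (by linarith) (by linarith [hbdd x1]))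
  have hγ21 : 0 < γ2 1 := hγ2pos 1 le_rfl
  have hγ21le : γ2 1 ≤ γ1 := by
    have : 0 < γ1 * (η * α 1) := mul_pos hγ1 (mul_pos hη (hαpos 1))
    rw [hγ2def]; linarith
  have hrec : ∀ k : ℕ, 1 ≤ k → (∫ ω, f (x (k+1) ω) ∂P) - f_inf
      ≤ (1 - δ1 * α k) * ((∫ ω, f (x k ω) ∂P) - f_inf) + δ2 * (α k)^2 := by
    intro k hk
    obtain ⟨hXY, hinner, hsq⟩ := moments_of_condExp_eq (ℱ.le k)
      (hgradcont.comp_stronglyMeasurable (hx_meas k hk)) (hint_grad k) (hint_g k) (hint_g2 k)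
      (hunbiased k hk) (hvar k hk)
    have hα := hαpos k
    have hI1 := hXY.const_mul (-(γ1 * α k))
    have hI2 := (hint_grad k).const_mul (γ1 * α k / 2 + γ1 * η / 4 * (α k) ^ 2)
    have hI3 := (hint_g2 k).const_mul ((3 / 4 * γ1 * η + L_g / 2 * γ1 ^ 2) * (α k) ^ 2)
    have hmono := integral_mono_ae (hint_f (k+1)) ((hint_f k).add ((hI1.add hI2).add hI3)) (by
      filter_upwards [hcauchy k hk, hHbd k hk] with ω h1 h2
      rw [hstep k hk ω]
      exact one_step_bound hLg.le hdiff hlip hα hγ1 hη (hγ2pos k hk) (hγ2def k) hMHη h2 h1)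
    rw [integral_add' (hint_f k) ((hI1.add hI2).add hI3), integral_add' (hI1.add hI2) hI3,
      integral_add' hI1 hI2, integral_const_mul, integral_const_mul, integral_const_mul]
      at hmono
    rw [hinner] at hmono
    have hPLint : 2 * c * ((∫ ω, f (x k ω) ∂P) - f_inf)
        ≤ ∫ ω, ‖gradient f (x k ω)‖ ^ 2 ∂P := by
      have h := integral_mono (((hint_f k).sub (integrable_const f_inf)).const_mul (2 * c))
        (hint_grad k) (fun ω => hPL (x k ω))
      simp only [Pi.sub_apply] at h
      rw [integral_const_mul, integral_sub (hint_f k) (integrable_const f_inf)] at h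
      simpa using h
    set A := ∫ ω, ‖gradient f (x k ω)‖ ^ 2 ∂P with hA
    have hA0 : 0 ≤ A := integral_nonneg fun ω => by positivity
    have hcoef : 0 ≤ (3 / 4 * γ1 * η + L_g / 2 * γ1 ^ 2) * (α k) ^ 2 := by positivity
    have h1 := mul_le_mul_of_nonneg_left hsq hcoef
    have hstepsize : α k * (6 * η + 2 * γ1 * (L_g + M_H)) ≤ 1 := by
      have h := hα2 k hk
      rwa [le_div_iff₀ (by positivity)] at h
    have h2 : α k * (η + L_g / 2 * γ1) ≤ 1 / 4 := by
      have h3 : 0 ≤ α k * (2 * η + 2 * γ1 * M_H) := by positivity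
      linarith
    -- The second-order terms absorb at most half of the remaining `-(γ1 * α / 2) * A`.
    have h4 : (γ1 * α k * A) * (α k * (η + L_g / 2 * γ1)) ≤ (γ1 * α k * A) * (1 / 4) :=
      mul_le_mul_of_nonneg_left h2 (by positivity)
    have h5 : γ2 1 * (α k * A) ≤ γ1 * (α k * A) := by gcongr
    have h6 : γ2 1 / 4 * α k * (2 * c * ((∫ ω, f (x k ω) ∂P) - f_inf)) ≤ γ2 1 / 4 * α k * A := by
      gcongr
    have h7 : 0 ≤ (3 / 4 * η + γ1 * M_H / 2) * γ1 * M_g * (α k) ^ 2 := by positivity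
    rw [hδ1, hδ2]
    linarith
  intro k hk
  induction k, hk using Nat.le_induction with
  | base =>
    simp only [hx1, integral_const, probReal_univ, one_smul, Nat.cast_one]
    rw [le_div_iff₀ (by linarith)]
    exact (mul_comm _ _).trans_le (le_max_left _ _)
  | succ k hk ih =>
    have hB : 0 < b + (k : ℝ) := by positivity
    have hδα : δ1 * (a / (b + k)) ≤ 1 := by
      have h := hα3 k hk
      rw [le_div_iff₀ (by positivity), hαdef] at h
      rw [hδ1]; linarith
    have h := hrec k hk
    rw [hαdef] at h
    rw [Nat.cast_add, Nat.cast_one, ← add_assoc]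
    exact sublinear_step hB hδ1a hδα (le_max_right _ _) hφ0 ih h
end
end
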